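/- A lens (f, φ) : A ⇌ B is a monomorphism in the category of small categories and lenses (left-cancellable with respect to lens composition) if and only if its underlying functor f is an injective-on-objects discrete opfibration, if and only if f is injective on objects and injective on morphisms. -/

import Mathlib

open CategoryTheory

universe u

/-- A functor `F` is a discrete opfibration if for every object `a` of its domain and
every morphism `u : F.obj a ⟶ b` of its codomain, there exists a unique morphism `w`
with domain `a` such that `F.map w = u` (up to the identification of codomains). -/
def IsDiscreteOpfibration {A B : Type u} [SmallCategory A] [SmallCategory B]
    (F : A ⥤ B) : Prop :=
  ∀ ⦃a : A⦄ ⦃b : B⦄ (u : F.obj a ⟶ b),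
    ∃! w : Σ a' : A, a ⟶ a', ∃ h : F.obj w.1 = b, F.map w.2 = u ≫ eqToHom h.symm

/-- A (delta) lens between small categories: a functor together with a lifting
operation satisfying the three lens axioms. `lift u` packages the codomain
`a'` of the chosen lift together with the lift `a ⟶ a'` itself. -/
structure Lens (A B : Type u) [SmallCategory A] [SmallCategory B] where
  /-- the underlying (Get) functor -/
  func : A ⥤ B
  /-- the lifting (Put) operation -/
  lift : ∀ ⦃a : A⦄ ⦃b : B⦄, (func.obj a ⟶ b) → Σ a' : A, a ⟶ a'
  /-- the codomain of the lift lies over the codomain of the lifted morphism -/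
  lift_cod : ∀ ⦃a : A⦄ ⦃b : B⦄ (u : func.obj a ⟶ b), func.obj (lift u).1 = b
  /-- axiom (1): `f (φ (a, u)) = u` -/
  lift_map : ∀ ⦃a : A⦄ ⦃b : B⦄ (u : func.obj a ⟶ b),
      func.map (lift u).2 = u ≫ eqToHom (lift_cod u).symm
  /-- axiom (2): `φ (a, 1) = 1` -/
  lift_id : ∀ a : A, lift (𝟙 (func.obj a)) = ⟨a, 𝟙 a⟩
  /-- axiom (3): `φ (a, v ∘ u) = φ (a', v) ∘ φ (a, u)` -/
  lift_comp : ∀ ⦃a : A⦄ ⦃b c : B⦄ (u : func.obj a ⟶ b) (v : b ⟶ c),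
      lift (u ≫ v) = ⟨(lift (eqToHom (lift_cod u) ≫ v)).1,
        (lift u).2 ≫ (lift (eqToHom (lift_cod u) ≫ v)).2⟩

namespace Lens

variable {A B C : Type u} [SmallCategory A] [SmallCategory B] [SmallCategory C]

theorem lift_eqToHom (L : Lens A B) {a a' : A} (h : a' = a) {b : B}
    (u : L.func.obj a ⟶ b) (h' : L.func.obj a' = L.func.obj a) :
    L.lift (eqToHom h' ≫ u) = ⟨(L.lift u).1, eqToHom h ≫ (L.lift u).2⟩ := by
  subst h; simp

/-- The identity lens on a small category. -/
def id (A : Type u) [SmallCategory A] : Lens A A where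
  func := Functor.id A
  lift _ b u := ⟨b, u⟩
  lift_cod _ _ _ := rfl
  lift_map := by intros; simp
  lift_id := by intros; rfl
  lift_comp := by intros; simp

/-- Composition of lenses: `(L.comp M).lift u = L.lift ((M.lift u).2)`. -/
def comp (L : Lens A B) (M : Lens B C) : Lens A C where
  func := L.func ⋙ M.func
  lift _ _ u := L.lift (M.lift u).2
  lift_cod a c u := by
    show M.func.obj (L.func.obj _) = c
    rw [L.lift_cod]
    exact M.lift_cod u
  lift_map a c u := by
    show M.func.map (L.func.map _) = _
    rw [L.lift_map, Functor.map_comp, M.lift_map, eqToHom_map]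
    simp
  lift_id a := by
    show L.lift (M.lift (𝟙 (M.func.obj (L.func.obj a)))).2 = _
    rw [M.lift_id]
    exact L.lift_id a
  lift_comp a c c' u v := by
    show L.lift (M.lift (u ≫ v)).2 = _
    rw [M.lift_comp u v]
    show L.lift ((M.lift u).2 ≫ (M.lift (eqToHom (M.lift_cod u) ≫ v)).2) = _
    rw [L.lift_comp]
    have key : M.lift (eqToHom (show (L.func ⋙ M.func).obj (L.lift (M.lift u).2).1 = c by
          show M.func.obj (L.func.obj _) = c; rw [L.lift_cod]; exact M.lift_cod u) ≫ v)
        = ⟨(M.lift (eqToHom (M.lift_cod u) ≫ v)).1,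
            eqToHom (L.lift_cod (M.lift u).2) ≫ (M.lift (eqToHom (M.lift_cod u) ≫ v)).2⟩ := by
      rw [show (eqToHom (show (L.func ⋙ M.func).obj (L.lift (M.lift u).2).1 = c by
          show M.func.obj (L.func.obj _) = c; rw [L.lift_cod]; exact M.lift_cod u) ≫ v)
        = eqToHom (congrArg M.func.obj (L.lift_cod (M.lift u).2)) ≫ (eqToHom (M.lift_cod u) ≫ v) by
          rw [← Category.assoc, eqToHom_trans]]
      exact M.lift_eqToHom (L.lift_cod (M.lift u).2) _ _
    beta_reduce
    rw [key]

/-- A lens is a monomorphism in the category of small categories and lenses if it is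
left-cancellable with respect to lens composition. -/
def IsMono (f : Lens A B) : Prop :=
  ∀ ⦃D : Type u⦄ [SmallCategory D], ∀ x y : Lens D A, x.comp f = y.comp f → x = y

/-- A lens is an epimorphism in the category of small categories and lenses if it is
right-cancellable with respect to lens composition. -/
def IsEpi (f : Lens A B) : Prop :=
  ∀ ⦃C : Type u⦄ [SmallCategory C], ∀ x y : Lens B C, f.comp x = f.comp y → x = y

end Lens

namespace Lens

variable {A B : Type u} [SmallCategory A] [SmallCategory B]

theorem ext_of_lift_eq {L M : Lens A B} (h : L.func = M.func)
    (hl : ∀ (a : A) (b : B) (v : M.func.obj a ⟶ b),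
      L.lift (eqToHom (Functor.congr_obj h a) ≫ v) = M.lift v) : L = M := by
  obtain ⟨F, l, _, _, _, _⟩ := L
  obtain ⟨G, m, _, _, _, _⟩ := M
  dsimp only at h
  subst h
  obtain rfl : l = m := by
    funext a b v
    simpa using hl a b v
  rfl

theorem lift_congr {L M : Lens A B} (h : L = M) {a : A} {b : B} (v : M.func.obj a ⟶ b) :
    L.lift (eqToHom (Functor.congr_obj (congrArg Lens.func h) a) ≫ v) = M.lift v := by
  subst h
  simp

theorem lift_comp_eqToHom (f : Lens A B) {a : A} {b b' : B} (v : f.func.obj a ⟶ b)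
    (h : b = b') : f.lift (v ≫ eqToHom h) = f.lift v := by
  subst h
  simp

theorem lift_eqToHom_id (f : Lens A B) {a : A} {b : B} (h : f.func.obj a = b) :
    f.lift (eqToHom h) = ⟨a, 𝟙 a⟩ := by
  subst h
  exact f.lift_id a

theorem lift_map_comp (f : Lens A B) {a c c' c'' : A} (h : f.func.obj a = f.func.obj c)
    (v : c ⟶ c') {w w' : c' ⟶ c''} (hw : w = w') :
    f.lift (eqToHom h ≫ f.func.map (v ≫ w')) =
      ⟨(f.lift (eqToHom (f.lift_cod (eqToHom h ≫ f.func.map v)) ≫ f.func.map w)).1,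
        (f.lift (eqToHom h ≫ f.func.map v)).2 ≫
          (f.lift (eqToHom (f.lift_cod (eqToHom h ≫ f.func.map v)) ≫ f.func.map w)).2⟩ := by
  rw [← hw, Functor.map_comp, ← Category.assoc]
  exact f.lift_comp _ _

/-- Objects of the fibre product of the underlying functor of a lens with itself. -/
structure KernelPair (f : Lens A B) : Type u where
  /-- the first component -/
  fst : A
  /-- the second component -/
  snd : A
  /-- both components lie over the same object -/
  w : f.func.obj fst = f.func.obj snd

namespace KernelPair

variable {f : Lens A B}

/-- Morphisms of the fibre product: pairs of morphisms with the same image. -/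
@[ext]
structure Hom (d e : KernelPair f) : Type u where
  /-- the first component -/
  fst : d.fst ⟶ e.fst
  /-- the second component -/
  snd : d.snd ⟶ e.snd
  /-- both components lie over the same morphism -/
  w : f.func.map fst ≫ eqToHom e.w = eqToHom d.w ≫ f.func.map snd

instance : SmallCategory (KernelPair f) where
  Hom := Hom
  id d := ⟨𝟙 _, 𝟙 _, by simp⟩
  comp p q := ⟨p.fst ≫ q.fst, p.snd ≫ q.snd, by
    rw [Functor.map_comp, Functor.map_comp, Category.assoc, q.w, ← Category.assoc, p.w,
      Category.assoc]⟩

@[simp]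
theorem id_fst (d : KernelPair f) : Hom.fst (𝟙 d) = 𝟙 d.fst := rfl

@[simp]
theorem id_snd (d : KernelPair f) : Hom.snd (𝟙 d) = 𝟙 d.snd := rfl

@[simp]
theorem comp_fst {d e e' : KernelPair f} (p : d ⟶ e) (q : e ⟶ e') :
    Hom.fst (p ≫ q) = p.fst ≫ q.fst := rfl

@[simp]
theorem comp_snd {d e e' : KernelPair f} (p : d ⟶ e) (q : e ⟶ e') :
    Hom.snd (p ≫ q) = p.snd ≫ q.snd := rfl

theorem sigma_hom_ext {d : KernelPair f} {p q : Σ e, d ⟶ e}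
    (h₁ : (⟨p.1.fst, p.2.fst⟩ : Σ a, d.fst ⟶ a) = ⟨q.1.fst, q.2.fst⟩)
    (h₂ : (⟨p.1.snd, p.2.snd⟩ : Σ a, d.snd ⟶ a) = ⟨q.1.snd, q.2.snd⟩) : p = q := by
  obtain ⟨⟨a, b, _⟩, ⟨p₁, p₂, _⟩⟩ := p
  obtain ⟨⟨a', b', _⟩, ⟨q₁, q₂, _⟩⟩ := q
  cases h₁
  cases h₂
  rfl

/-- The first projection lens; a morphism is lifted by pairing it with the chosen lift of its
image. -/
def fstLens (f : Lens A B) : Lens (KernelPair f) A where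
  func := { obj := fst, map := Hom.fst }
  lift d a v := ⟨⟨a, (f.lift (eqToHom d.w.symm ≫ f.func.map v)).1, (f.lift_cod _).symm⟩,
    ⟨v, (f.lift (eqToHom d.w.symm ≫ f.func.map v)).2, by simp [f.lift_map]⟩⟩
  lift_cod _ _ _ := rfl
  lift_map := by intros; simp
  lift_id d := by
    apply sigma_hom_ext
    · rfl
    · dsimp only
      simpa using f.lift_eqToHom_id d.w.symm
  lift_comp d a a' v v' := by
    apply sigma_hom_ext
    · simp
    · exact f.lift_map_comp d.w.symm v (Category.id_comp v')

/-- The second projection lens; a morphism is lifted by pairing it with the chosen lift of its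
image. -/
def sndLens (f : Lens A B) : Lens (KernelPair f) A where
  func := { obj := snd, map := Hom.snd }
  lift d a v := ⟨⟨(f.lift (eqToHom d.w ≫ f.func.map v)).1, a, f.lift_cod _⟩,
    ⟨(f.lift (eqToHom d.w ≫ f.func.map v)).2, v, by simp [f.lift_map]⟩⟩
  lift_cod _ _ _ := rfl
  lift_map := by intros; simp
  lift_id d := by
    apply sigma_hom_ext
    · dsimp only
      simpa using f.lift_eqToHom_id d.w
    · rfl
  lift_comp d a a' v v' := by
    apply sigma_hom_ext
    · exact f.lift_map_comp d.w v (Category.id_comp v')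
    · simp

theorem fstLens_lift_lift (d : KernelPair f) {b : B} (v : f.func.obj d.snd ⟶ b) :
    (fstLens f).lift (f.lift (eqToHom d.w ≫ v)).2 = (sndLens f).lift (f.lift v).2 := by
  apply sigma_hom_ext
  · change f.lift (eqToHom d.w ≫ v) = f.lift (eqToHom d.w ≫ f.func.map (f.lift v).2)
    rw [f.lift_map, ← Category.assoc, lift_comp_eqToHom]
  · change f.lift (eqToHom d.w.symm ≫ f.func.map (f.lift (eqToHom d.w ≫ v)).2) = f.lift v
    rw [f.lift_map, ← Category.assoc, lift_comp_eqToHom, ← Category.assoc, eqToHom_trans,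
      eqToHom_refl, Category.id_comp]

theorem fstLens_comp_eq_sndLens_comp (f : Lens A B) :
    (fstLens f).comp f = (sndLens f).comp f := by
  have map_eq : ∀ {d e : KernelPair f} (p : d ⟶ e),
      f.func.map p.fst = eqToHom d.w ≫ f.func.map p.snd ≫ eqToHom e.w.symm := fun p => by
    rw [← Category.assoc, ← p.w, Category.assoc, eqToHom_trans, eqToHom_refl, Category.comp_id]
  exact ext_of_lift_eq (CategoryTheory.Functor.ext (fun d => d.w) fun _ _ p => map_eq p)
    fun d _ v => fstLens_lift_lift d v

end KernelPair

theorem IsMono.injective_obj {f : Lens A B} (hf : f.IsMono) :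
    Function.Injective f.func.obj := fun a a' h =>
  Functor.congr_obj (congrArg Lens.func
    (hf _ _ (KernelPair.fstLens_comp_eq_sndLens_comp f))) (⟨a, a', h⟩ : KernelPair f)

theorem IsMono.map_injective {f : Lens A B} (hf : f.IsMono) {a a' : A} (v w : a ⟶ a')
    (h : f.func.map v = f.func.map w) : v = w := by
  let p : (⟨a, a, rfl⟩ : KernelPair f) ⟶ ⟨a', a', rfl⟩ := ⟨v, w, by simpa using h⟩
  have hvw : v = eqToHom rfl ≫ w ≫ eqToHom rfl := Functor.congr_hom (congrArg Lens.func
    (hf _ _ (KernelPair.fstLens_comp_eq_sndLens_comp f))) p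
  simpa using hvw

/-- Over a functor injective on objects and morphisms, morphisms out of a fixed object are
determined by their image. -/
theorem sigma_eq_of_map_eq {f : Lens A B} (ho : Function.Injective f.func.obj)
    (hm : ∀ ⦃a a' : A⦄ (v w : a ⟶ a'), f.func.map v = f.func.map w → v = w)
    {a : A} {p q : Σ a', a ⟶ a'} (h : f.func.obj p.1 = f.func.obj q.1)
    (hpq : f.func.map p.2 = f.func.map q.2 ≫ eqToHom h.symm) : p = q := by
  obtain ⟨a', v⟩ := p
  obtain ⟨a'', w⟩ := q
  obtain rfl : a' = a'' := ho h
  obtain rfl : v = w := hm _ _ (by simpa using hpq)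
  rfl

theorem isMono_of_injective {f : Lens A B} (ho : Function.Injective f.func.obj)
    (hm : ∀ ⦃a a' : A⦄ (v w : a ⟶ a'), f.func.map v = f.func.map w → v = w) : f.IsMono := by
  intro D _ x y hxy
  have hF : x.func ⋙ f.func = y.func ⋙ f.func := congrArg Lens.func hxy
  have hxyF : x.func = y.func :=
    CategoryTheory.Functor.ext (fun d => ho (Functor.congr_obj hF d)) fun d e k => hm _ _ (by
      simpa [eqToHom_map] using Functor.congr_hom hF k)
  have lift_map_eq : ∀ {a a' : A} (v : a ⟶ a'), f.lift (f.func.map v) = ⟨a', v⟩ := fun v =>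
    sigma_eq_of_map_eq ho hm (f.lift_cod _) (f.lift_map _)
  refine ext_of_lift_eq hxyF fun d a v => ?_
  have h : x.lift (f.lift (eqToHom (Functor.congr_obj hF d) ≫ f.func.map v)).2 =
      y.lift (f.lift (f.func.map v)).2 := lift_congr hxy (a := d) (f.func.map v)
  have hv : eqToHom (Functor.congr_obj hF d) ≫ f.func.map v =
      f.func.map (eqToHom (Functor.congr_obj hxyF d) ≫ v) := by
    rw [Functor.map_comp, eqToHom_map]
  rwa [lift_map_eq, hv, lift_map_eq] at h

theorem isDiscreteOpfibration_of_injective {f : Lens A B} (ho : Function.Injective f.func.obj)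
    (hm : ∀ ⦃a a' : A⦄ (v w : a ⟶ a'), f.func.map v = f.func.map w → v = w) :
    IsDiscreteOpfibration f.func := by
  intro a b v
  refine ⟨f.lift v, ⟨f.lift_cod v, f.lift_map v⟩, ?_⟩
  rintro p ⟨h, hp⟩
  exact sigma_eq_of_map_eq ho hm (h.trans (f.lift_cod v).symm) (by rw [hp, f.lift_map]; simp)

end Lens

theorem IsDiscreteOpfibration.map_injective {A B : Type u} [SmallCategory A] [SmallCategory B]
    {F : A ⥤ B} (hF : IsDiscreteOpfibration F) {a a' : A} (v w : a ⟶ a')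
    (h : F.map v = F.map w) : v = w := by
  have := (hF (F.map w)).unique (y₁ := ⟨a', v⟩) (y₂ := ⟨a', w⟩)
    ⟨rfl, by simpa using h⟩ ⟨rfl, by simp⟩
  simpa using this

/-- A lens is a monomorphism in the category of small categories and lenses iff its
underlying functor is an injective-on-objects discrete opfibration, iff its underlying
functor is injective on objects and injective on morphisms. -/
theorem lens_mono_characterisation {A B : Type u} [SmallCategory A] [SmallCategory B]
    (f : Lens A B) :
    (f.IsMono ↔ (Function.Injective f.func.obj ∧ IsDiscreteOpfibration f.func)) ∧
    (f.IsMono ↔ (Function.Injective f.func.obj ∧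
      ∀ ⦃a a' : A⦄ (u v : a ⟶ a'), f.func.map u = f.func.map v → u = v)) := by
  refine ⟨⟨fun hf => ⟨hf.injective_obj, ?_⟩, fun ⟨ho, hd⟩ => ?_⟩,
    ⟨fun hf => ⟨hf.injective_obj, fun _ _ => hf.map_injective⟩, fun ⟨ho, hm⟩ => ?_⟩⟩
  · exact Lens.isDiscreteOpfibration_of_injective hf.injective_obj fun _ _ => hf.map_injective
  · exact Lens.isMono_of_injective ho fun _ _ => hd.map_injective
  · exact Lens.isMono_of_injective ho hm
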